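/- Let E be a real normed vector space and let β : ℝ → E be differentiable with derivative β' interval-integrable on compact intervals. Fix z_t ≤ z̄ ≤ z', b̂ ∈ E, d ∈ E, and set β̂(z') = b̂ + (z' - z_t) • d. Assume ‖b̂ - β(z_t)‖ ≤ ε₁, ‖d - β'(z_t)‖ ≤ ε₂, and that β' is K-Lipschitz on [z_t, z̄]. Then ‖β̂(z') - β(z')‖ ≤ ε₁ + ε₂·(z' - z_t) + ‖∫_{z̄}^{z'} (β'(z_t) - β'(s)) ds‖ + (K/2)·(z̄ - z_t)². -/

import Mathlib

open MeasureTheory intervalIntegral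

/-- Whole-path error theorem for the approximate homotopy algorithm: `z_t` is the last
corrector point, `z̄` is the first point after `z_t` where the active set changes (so `β'`
is `K`-Lipschitz on `[z_t, z̄]` with `K = |A| L₃ M`), and `β̂ z' = bhat + (z' - z_t) • d`
is the predictor extrapolation with value error `ε₁` and derivative error `ε₂`. -/
theorem whole_path_error_bound
    {E : Type*} [NormedAddCommGroup E] [NormedSpace ℝ E] [CompleteSpace E]
    (β β' : ℝ → E) (hderiv : ∀ x : ℝ, HasDerivAt β (β' x) x)
    (hint : ∀ a b : ℝ, IntervalIntegrable β' volume a b)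
    (z_t zbar z' : ℝ) (hz₁ : z_t ≤ zbar) (hz₂ : zbar ≤ z')
    (bhat d : E) (ε₁ ε₂ K : ℝ)
    (hval : ‖bhat - β z_t‖ ≤ ε₁) (hder : ‖d - β' z_t‖ ≤ ε₂)
    (hLip : ∀ s ∈ Set.Icc z_t zbar, ∀ u ∈ Set.Icc z_t zbar,
      ‖β' s - β' u‖ ≤ K * |s - u|) :
    ‖(bhat + (z' - z_t) • d) - β z'‖ ≤
      ε₁ + ε₂ * (z' - z_t) + ‖∫ s in zbar..z', (β' z_t - β' s)‖
        + (K / 2) * (zbar - z_t) ^ 2 := by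
  have hsub : ∀ a b : ℝ, IntervalIntegrable (fun s => β' z_t - β' s) volume a b :=
    fun a b => intervalIntegrable_const.sub (hint a b)
  have hI : ∀ a b : ℝ, (∫ s in a..b, (β' z_t - β' s)) = (b - a) • β' z_t - (β b - β a) := by
    intro a b
    rw [intervalIntegral.integral_sub intervalIntegrable_const (hint a b), intervalIntegral.integral_const,
      integral_eq_sub_of_hasDerivAt (fun x _ => hderiv x) (hint a b)]
  have key : (bhat + (z' - z_t) • d) - β z' = (bhat - β z_t) + (z' - z_t) • (d - β' z_t)
      + (∫ s in zbar..z', (β' z_t - β' s)) + ∫ s in z_t..zbar, (β' z_t - β' s) := by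
    rw [hI, hI]
    module
  have h2 : ‖(z' - z_t) • (d - β' z_t)‖ ≤ ε₂ * (z' - z_t) := by
    have h0 : 0 ≤ z' - z_t := by linarith
    rw [norm_smul, Real.norm_of_nonneg h0, mul_comm]
    exact mul_le_mul_of_nonneg_right hder h0
  have h4 : ‖∫ s in z_t..zbar, (β' z_t - β' s)‖ ≤ (K / 2) * (zbar - z_t) ^ 2 := by
    have hb : ‖∫ s in z_t..zbar, (β' z_t - β' s)‖ ≤ ∫ s in z_t..zbar, K * (s - z_t) := by
      apply norm_integral_le_of_norm_le hz₁
      · refine Filter.Eventually.of_forall fun s hs => ?_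
        have h := hLip z_t ⟨le_refl _, hz₁⟩ s ⟨hs.1.le, hs.2⟩
        rwa [abs_sub_comm, abs_of_nonneg (by linarith [hs.1])] at h
      · exact Continuous.intervalIntegrable (by fun_prop) _ _
    refine hb.trans (le_of_eq ?_)
    rw [intervalIntegral.integral_const_mul, intervalIntegral.integral_sub (Continuous.intervalIntegrable (by fun_prop) _ _)
      intervalIntegrable_const, integral_id, intervalIntegral.integral_const, smul_eq_mul]
    ring
  rw [key]
  refine (norm_add_le _ _).trans (add_le_add ((norm_add_le _ _).trans (add_le_add
    ((norm_add_le _ _).trans (add_le_add hval h2)) le_rfl)) h4)
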